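/- (UL factorization for the Geronimus transformation.) Let v be quasi-definite with SMOP (P_n), Jacobi matrix J and associated first-kind polynomials (P^{(1)}_n), let c ∈ ℂ, and let v̂ be a canonical Geronimus transformation of v at c (i.e. (x−c)v̂ = v) whose free moment v̂_0 satisfies v_0·P^{(1)}_{n−1}(c) + v̂_0·P_n(c) ≠ 0 for all n ≥ 1; suppose v̂ is quasi-definite with SMOP (P̂_n), P̂_n(c) ≠ 0 for all n, and Jacobi matrix Ĵ. Define U as the upper bidiagonal matrix with diagonal β_n = −P̂_{n+1}(c)/P̂_n(c) and superdiagonal 1, and L as the unit lower bidiagonal matrix with subdiagonal ℓ_n = −(v_0·P^{(1)}_{n−1}(c) + v̂_0·P_n(c))/(v_0·P^{(1)}_{n−2}(c) + v̂_0·P_{n−1}(c)). Then, entrywise, J − cI = U·L and Ĵ − cI = L·U. -/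

import Mathlib

open Polynomial

noncomputable section

/-- Apply a linear functional (identified with its moment sequence) to a polynomial:
`⟨u, p⟩ = Σ_k c_k u_k` for `p = Σ_k c_k x^k`. -/
def fapply (u : ℕ → ℂ) (p : Polynomial ℂ) : ℂ := p.sum fun k ck => ck * u k

/-- `P` is the sequence of monic orthogonal polynomials (SMOP) of the functional `u`. -/
def IsSMOP (u : ℕ → ℂ) (P : ℕ → Polynomial ℂ) : Prop :=
  (∀ n, (P n).Monic) ∧ (∀ n, (P n).natDegree = n) ∧
    (∀ n m, n ≠ m → fapply u (P n * P m) = 0) ∧ (∀ n, fapply u (P n * P n) ≠ 0)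

/-- A functional is quasi-definite iff it admits a SMOP. -/
def IsQuasiDefinite (u : ℕ → ℂ) : Prop := ∃ P, IsSMOP u P

/-- Three term recurrence relation `x P_n = P_{n+1} + b_n P_n + a_n P_{n-1}`,
with `P_{-1} = 0`, `P_0 = 1`. -/
def HasTTRR (P : ℕ → Polynomial ℂ) (a b : ℕ → ℂ) : Prop :=
  P 0 = 1 ∧ X * P 0 = P 1 + C (b 0) * P 0 ∧
    ∀ n, 1 ≤ n → X * P n = P (n + 1) + C (b n) * P n + C (a n) * P (n - 1)

/-- Wronskian `W(p,q)(x) = p(x) q'(x) - p'(x) q(x)`. -/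
def Wr (p q : Polynomial ℂ) (x : ℂ) : ℂ :=
  p.eval x * (derivative q).eval x - (derivative p).eval x * q.eval x

/-- The monic Jacobi matrix with diagonal `b`, superdiagonal `1` and subdiagonal
entries `J_{n+1,n} = a_{n+1}`. -/
def jacobi (a b : ℕ → ℂ) (i j : ℕ) : ℂ :=
  if i = j then b i else if j = i + 1 then 1 else if i = j + 1 then a i else 0

/-- Entrywise product of semi-infinite (banded) matrices; the sum has finite support. -/
def mprod (A B : ℕ → ℕ → ℂ) (i j : ℕ) : ℂ := ∑' k, A i k * B k j

/-- `w` is the moment sequence of the inverse functional `u⁻¹`: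
the convolution of the moments of `u` and `w` is `(1,0,0,…)`. -/
def IsInverseMoments (u w : ℕ → ℂ) : Prop :=
  ∀ n, ∑ k ∈ Finset.range (n + 1), u k * w (n - k) = if n = 0 then 1 else 0

/-- Apply a functional `u` to the second (outer) variable `y` of a bivariate polynomial
`D = Σ_k q_k(x) y^k`, giving `Σ_k u_k q_k(x)`. -/
def fapplyY (u : ℕ → ℂ) (D : Polynomial (Polynomial ℂ)) : Polynomial ℂ :=
  D.sum fun k q => u k • q

/-- `P^{(1)}_{n-1}`, with the convention `P^{(1)}_{-1} = 0`. -/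
def P1prev (P1 : ℕ → Polynomial ℂ) (n : ℕ) : Polynomial ℂ :=
  if n = 0 then 0 else P1 (n - 1)

/-!
A monic polynomial of degree `n + 1` that is orthogonal to all polynomials of degree `< n` differs
from the `(n + 1)`-st orthogonal polynomial by a multiple of the `n`-th one. As
`⟨v̂, (x - c) p⟩ = ⟨v, p⟩`, this applies to `(x - c) P_n` for `v̂` and to `P̂_{n+1}` for `v`, giving
`(x - c) P_n = P̂_{n+1} + β_n P̂_n` and `P̂_{n+1} = P_{n+1} + ℓ_{n+1} P_n`.
Evaluating the first relation at `c` identifies `β_n`. Applying `v̂` to the second one gives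
`ℓ_{n+1} = -⟨v̂, P_{n+1}⟩ / ⟨v̂, P_n⟩`, where `⟨v̂, P_n⟩ = v_0 P^{(1)}_{n-1}(c) + v̂_0 P_n(c)`
because both sides satisfy the recurrence of `P_n` at `c`. Composing the two relations in either
order yields recurrences for `P` and `P̂` whose coefficients are the entries of `U L + c I` and
`L U + c I`, and recurrence coefficients are unique.
-/

/-- The linear functional with moment sequence `u`; it is `fapply u` bundled as a linear map. -/
def momentFunctional (u : ℕ → ℂ) : ℂ[X] →ₗ[ℂ] ℂ := lsum fun k => LinearMap.mulRight ℂ (u k)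

lemma fapply_add (u : ℕ → ℂ) (p q : ℂ[X]) : fapply u (p + q) = fapply u p + fapply u q :=
  map_add (momentFunctional u) p q

lemma fapply_sub (u : ℕ → ℂ) (p q : ℂ[X]) : fapply u (p - q) = fapply u p - fapply u q :=
  map_sub (momentFunctional u) p q

lemma fapply_C_mul (u : ℕ → ℂ) (r : ℂ) (p : ℂ[X]) : fapply u (C r * p) = r * fapply u p := by
  rw [← smul_eq_C_mul]
  exact map_smul (momentFunctional u) r p

lemma fapply_monomial (u : ℕ → ℂ) (n : ℕ) (r : ℂ) : fapply u (monomial n r) = r * u n :=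
  sum_monomial_index r _ (zero_mul _)

lemma fapply_one (u : ℕ → ℂ) : fapply u 1 = u 0 := by
  simpa using fapply_monomial u 0 1

namespace IsSMOP

variable {u : ℕ → ℂ} {P : ℕ → ℂ[X]}

/-- The orthogonal polynomials of a functional as a `Polynomial.Sequence`, which makes the results
on spans and linear independence available. -/
def sequence (hP : IsSMOP u P) : Polynomial.Sequence ℂ :=
  ⟨P, fun n => by rw [degree_eq_natDegree (hP.1 n).ne_zero, hP.2.1 n]⟩

lemma degree_eq (hP : IsSMOP u P) (n : ℕ) : (P n).degree = n := hP.sequence.degree_eq n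

lemma linearIndependent (hP : IsSMOP u P) : LinearIndependent ℂ P := hP.sequence.linearIndependent

lemma coeff_self (hP : IsSMOP u P) (n : ℕ) : (P n).coeff n = 1 := by
  simpa only [hP.2.1 n] using (hP.1 n).coeff_natDegree

lemma zero_eq_one (hP : IsSMOP u P) : P 0 = 1 := (hP.1 0).natDegree_eq_zero.mp (hP.2.1 0)

lemma moment_zero_ne_zero (hP : IsSMOP u P) : u 0 ≠ 0 := by
  simpa only [hP.zero_eq_one, mul_one, fapply_one] using hP.2.2.2 0

lemma fapply_mul_eq_zero_of_degree_lt (hP : IsSMOP u P) {n : ℕ} {p : ℂ[X]} (hp : p.degree < n) :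
    fapply u (P n * p) = 0 := by
  have hspan : p ∈ Submodule.span ℂ (P '' Set.Iio n) := by
    have h := hP.sequence.span_degreeLT fun k (_ : k < n) => (hP.1 k).leadingCoeff ▸ isUnit_one
    exact h ▸ mem_degreeLT.mpr hp
  have hle : Submodule.span ℂ (P '' Set.Iio n) ≤
      (momentFunctional u ∘ₗ LinearMap.mulLeft ℂ (P n)).ker := by
    rw [Submodule.span_le]
    rintro _ ⟨k, hk, rfl⟩
    exact hP.2.2.1 n k hk.ne'
  exact hle hspan

lemma fapply_succ_eq_zero (hP : IsSMOP u P) (n : ℕ) : fapply u (P (n + 1)) = 0 := by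
  simpa only [hP.zero_eq_one, mul_one] using hP.2.2.1 (n + 1) 0 n.succ_ne_zero

lemma degree_sub_coeff_mul_lt (hP : IsSMOP u P) {n : ℕ} {p : ℂ[X]} (hp : p.degree ≤ n) :
    (p - C (p.coeff n) * P n).degree < n := by
  rw [degree_lt_iff_coeff_zero]
  intro k hk
  rw [coeff_sub, coeff_C_mul]
  rcases hk.eq_or_lt with rfl | hlt
  · rw [hP.coeff_self, mul_one, sub_self]
  · have hlt' : (n : WithBot ℕ) < k := Nat.cast_lt.mpr hlt
    rw [coeff_eq_zero_of_degree_lt (hp.trans_lt hlt'),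
      coeff_eq_zero_of_degree_lt ((hP.degree_eq n).trans_lt hlt'), mul_zero, sub_zero]

lemma fapply_mul_of_degree_le (hP : IsSMOP u P) {n : ℕ} {p : ℂ[X]} (hp : p.degree ≤ n) :
    fapply u (P n * p) = p.coeff n * fapply u (P n * P n) := by
  have horth := hP.fapply_mul_eq_zero_of_degree_lt (hP.degree_sub_coeff_mul_lt hp)
  rwa [mul_sub, mul_left_comm, fapply_sub, fapply_C_mul, sub_eq_zero] at horth

lemma eq_zero_of_fapply_mul_eq_zero (hP : IsSMOP u P) {n : ℕ} {q : ℂ[X]} (hq : q.degree < n)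
    (horth : ∀ p : ℂ[X], p.degree < n → fapply u (q * p) = 0) : q = 0 := by
  by_contra hne
  have hK := hP.fapply_mul_of_degree_le (degree_le_natDegree (p := q))
  rw [mul_comm, horth _ (by rwa [hP.degree_eq, ← degree_eq_natDegree hne])] at hK
  exact mul_ne_zero (leadingCoeff_ne_zero.mpr hne) (hP.2.2.2 _) hK.symm

lemma exists_eq_add_C_mul_of_fapply_mul_eq_zero (hP : IsSMOP u P) {n : ℕ} {q : ℂ[X]}
    (hmonic : q.Monic) (hdeg : q.natDegree = n + 1)
    (horth : ∀ p : ℂ[X], p.degree < n → fapply u (q * p) = 0) :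
    ∃ r, q = P (n + 1) + C r * P n := by
  have hlt : (q - P (n + 1)).degree < (n + 1 : ℕ) := by
    have hcoeff : q.coeff (n + 1) = 1 := by rw [← hdeg, hmonic.coeff_natDegree]
    simpa only [hcoeff, C_1, one_mul] using
      hP.degree_sub_coeff_mul_lt (degree_le_of_natDegree_le hdeg.le)
  set r := (q - P (n + 1)).coeff n
  have hzero : q - P (n + 1) - C r * P n = 0 := by
    refine hP.eq_zero_of_fapply_mul_eq_zero
      (hP.degree_sub_coeff_mul_lt (Order.le_of_lt_succ hlt)) fun p hp => ?_
    have hp' : p.degree < (n + 1 : ℕ) := hp.trans (Nat.cast_lt.mpr n.lt_succ_self)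
    rw [sub_mul, sub_mul, mul_assoc, fapply_sub, fapply_sub, fapply_C_mul, horth p hp,
      hP.fapply_mul_eq_zero_of_degree_lt hp, hP.fapply_mul_eq_zero_of_degree_lt hp']
    ring
  exact ⟨r, by linear_combination hzero⟩

end IsSMOP

lemma eq_of_three_term_recurrence {R : Type*} [Ring R] {s t y z : ℕ → R}
    (hy : ∀ n, y (n + 2) = s n * y (n + 1) - t n * y n)
    (hz : ∀ n, z (n + 2) = s n * z (n + 1) - t n * z n) (h0 : y 0 = z 0) (h1 : y 1 = z 1)
    (n : ℕ) : y n = z n := by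
  induction n using Nat.twoStepInduction with
  | zero => exact h0
  | one => exact h1
  | more n ih0 ih1 => rw [hy, hz, ih0, ih1]

namespace HasTTRR

variable {P P1 : ℕ → ℂ[X]} {a a' b b' : ℕ → ℂ}

lemma X_mul_succ (h : HasTTRR P a b) (n : ℕ) :
    X * P (n + 1) = P (n + 2) + C (b (n + 1)) * P (n + 1) + C (a (n + 1)) * P n :=
  h.2.2 (n + 1) le_add_self

lemma X_mul_P1prev_succ (h : HasTTRR P1 (fun n => a (n + 1)) fun n => b (n + 1)) (n : ℕ) :
    X * P1prev P1 (n + 1) =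
      P1prev P1 (n + 2) + C (b (n + 1)) * P1prev P1 (n + 1) + C (a (n + 1)) * P1prev P1 n := by
  cases n with
  | zero => simpa [P1prev] using h.2.1
  | succ n => simpa [P1prev] using h.X_mul_succ n

lemma jacobi_eq (h : HasTTRR P a b) (h' : HasTTRR P a' b') (hP : LinearIndependent ℂ P) :
    jacobi a b = jacobi a' b' := by
  have hb0 : b 0 = b' 0 := by
    have hC := add_left_cancel (h.2.1.symm.trans h'.2.1)
    exact C_injective (mul_right_cancel₀ (hP.ne_zero 0) hC)
  have hsucc (n : ℕ) : b (n + 1) = b' (n + 1) ∧ a (n + 1) = a' (n + 1) := by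
    have hpair : LinearIndependent ℂ ![P (n + 1), P n] := by
      convert hP.comp ![n + 1, n] (injective_pair_iff_ne.mpr n.succ_ne_self) using 1
      ext1 k
      fin_cases k <;> rfl
    refine hpair.eq_of_pair ?_
    simp only [smul_eq_C_mul]
    linear_combination h'.X_mul_succ n - h.X_mul_succ n
  ext i j
  unfold jacobi
  split_ifs with _ _ hsub
  · cases i with
    | zero => exact hb0
    | succ n => exact (hsucc n).1
  · rfl
  · exact hsub ▸ (hsucc j).2
  · rfl

end HasTTRR

/-- `vh` is a canonical Geronimus transformation of `v` at `c`, i.e. `(x - c) vh = v`, stated in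
terms of moments. -/
def IsGeronimusTransform (c : ℂ) (v vh : ℕ → ℂ) : Prop := ∀ n, vh (n + 1) - c * vh n = v n

namespace IsGeronimusTransform

variable {c : ℂ} {v vh : ℕ → ℂ} {P P1 Ph : ℕ → ℂ[X]} {a b : ℕ → ℂ}

lemma fapply_X_sub_C_mul (h : IsGeronimusTransform c v vh) (p : ℂ[X]) :
    fapply vh ((X - C c) * p) = fapply v p := by
  induction p using Polynomial.induction_on' with
  | add p q hp hq => rw [mul_add, fapply_add, fapply_add, hp, hq]
  | monomial n r =>
    rw [sub_mul, fapply_sub, fapply_C_mul, X_mul_monomial, fapply_monomial, fapply_monomial,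
      fapply_monomial, ← h n]
    ring

lemma X_sub_C_mul_eq (h : IsGeronimusTransform c v vh) (hP : IsSMOP v P) (hPh : IsSMOP vh Ph)
    {n : ℕ} (hc : (Ph n).eval c ≠ 0) :
    (X - C c) * P n = Ph (n + 1) + C (-((Ph (n + 1)).eval c / (Ph n).eval c)) * Ph n := by
  have hdeg : ((X - C c) * P n).natDegree = n + 1 := by
    rw [(monic_X_sub_C c).natDegree_mul (hP.1 n), natDegree_X_sub_C, hP.2.1, add_comm]
  obtain ⟨r, hr⟩ := hPh.exists_eq_add_C_mul_of_fapply_mul_eq_zero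
    ((monic_X_sub_C c).mul (hP.1 n)) hdeg fun p hp => by
      rw [mul_assoc, h.fapply_X_sub_C_mul, hP.fapply_mul_eq_zero_of_degree_lt hp]
  have heval : 0 = (Ph (n + 1)).eval c + r * (Ph n).eval c := by
    simpa using congrArg (eval c) hr
  have hr_eq : r = -((Ph (n + 1)).eval c / (Ph n).eval c) := by
    rw [← neg_div, eq_div_iff hc]
    linear_combination -heval
  rw [hr, hr_eq]

lemma succ_eq (h : IsGeronimusTransform c v vh) (hP : IsSMOP v P) (hPh : IsSMOP vh Ph)
    {n : ℕ} (hn : fapply vh (P n) ≠ 0) :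
    Ph (n + 1) = P (n + 1) + C (-fapply vh (P (n + 1)) / fapply vh (P n)) * P n := by
  obtain ⟨r, hr⟩ := hP.exists_eq_add_C_mul_of_fapply_mul_eq_zero (hPh.1 (n + 1)) (hPh.2.1 (n + 1))
    fun p hp => by
      have hdeg : ((X - C c) * p).degree < ((n + 1 : ℕ) : WithBot ℕ) := by
        rw [degree_mul, degree_X_sub_C, add_comm, Nat.cast_add, Nat.cast_one]
        exact WithBot.add_lt_add_right WithBot.one_ne_bot hp
      rw [← h.fapply_X_sub_C_mul, mul_left_comm, hPh.fapply_mul_eq_zero_of_degree_lt hdeg]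
  have hfapply : 0 = fapply vh (P (n + 1)) + r * fapply vh (P n) := by
    rw [← fapply_C_mul, ← fapply_add, ← hr, hPh.fapply_succ_eq_zero]
  have hr_eq : r = -fapply vh (P (n + 1)) / fapply vh (P n) := by
    rw [eq_div_iff hn]
    linear_combination -hfapply
  rw [hr, hr_eq]

lemma fapply_eq (h : IsGeronimusTransform c v vh) (hP : IsSMOP v P) (hrec : HasTTRR P a b)
    (hP1 : HasTTRR P1 (fun n => a (n + 1)) fun n => b (n + 1)) (n : ℕ) :
    fapply vh (P n) = v 0 * (P1prev P1 n).eval c + vh 0 * (P n).eval c := by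
  refine eq_of_three_term_recurrence (y := fun n => fapply vh (P n))
    (z := fun n => v 0 * (P1prev P1 n).eval c + vh 0 * (P n).eval c)
    (s := fun n => c - b (n + 1)) (t := fun n => a (n + 1)) (fun n => ?_) (fun n => ?_) ?_ ?_ n
  · have hX : (X - C c) * P (n + 1) =
        P (n + 2) - C (c - b (n + 1)) * P (n + 1) + C (a (n + 1)) * P n := by
      rw [C_sub]
      linear_combination hrec.X_mul_succ n
    have hfapply := h.fapply_X_sub_C_mul (P (n + 1))
    rw [hX, hP.fapply_succ_eq_zero, fapply_add, fapply_sub, fapply_C_mul, fapply_C_mul] at hfapply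
    linear_combination hfapply
  · have hevalP := congrArg (eval c) (hrec.X_mul_succ n)
    have hevalP1 := congrArg (eval c) (hP1.X_mul_P1prev_succ n)
    simp only [eval_mul, eval_add, eval_X, eval_C] at hevalP hevalP1
    linear_combination -v 0 * hevalP1 - vh 0 * hevalP
  · simp [hrec.1, P1prev, fapply_one]
  · have hP_one : P 1 = (X - C c) * 1 + C (c - b 0) * 1 := by
      rw [C_sub, ← hrec.1]
      linear_combination -hrec.2.1
    simp only [hP_one, fapply_add, fapply_C_mul, h.fapply_X_sub_C_mul, fapply_one]
    simp [P1prev, hP1.1]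
    ring

end IsGeronimusTransform

section Connection

variable {c : ℂ} {P Ph : ℕ → ℂ[X]} {β ℓ : ℕ → ℂ}

lemma hasTTRR_of_connection (hP0 : P 0 = 1) (hPh0 : Ph 0 = 1)
    (hup : ∀ n, (X - C c) * P n = Ph (n + 1) + C (β n) * Ph n)
    (hdown : ∀ n, Ph (n + 1) = P (n + 1) + C (ℓ (n + 1)) * P n) :
    HasTTRR P (fun n => β n * ℓ n) fun n => β n + ℓ (n + 1) + c := by
  refine ⟨hP0, ?_, fun n hn => ?_⟩
  · simp only [C_add]
    linear_combination hup 0 + hdown 0 + C (β 0) * (hPh0 - hP0)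
  · obtain ⟨n, rfl⟩ := Nat.exists_eq_add_of_le' hn
    simp only [C_add, C_mul, Nat.add_sub_cancel]
    linear_combination hup (n + 1) + hdown (n + 1) + C (β (n + 1)) * hdown n

lemma hasTTRR_transform_of_connection (hP0 : P 0 = 1) (hPh0 : Ph 0 = 1)
    (hup : ∀ n, (X - C c) * P n = Ph (n + 1) + C (β n) * Ph n)
    (hdown : ∀ n, Ph (n + 1) = P (n + 1) + C (ℓ (n + 1)) * P n) :
    HasTTRR Ph (fun n => ℓ n * β (n - 1)) fun n => β n + (if n = 0 then 0 else ℓ n) + c := by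
  refine ⟨hPh0, ?_, fun n hn => ?_⟩
  · simp only [C_add, if_true, C_0]
    linear_combination hup 0 + (X - C c) * (hPh0 - hP0)
  · obtain ⟨n, rfl⟩ := Nat.exists_eq_add_of_le' hn
    simp only [C_add, C_mul, Nat.add_sub_cancel, n.succ_ne_zero, if_false]
    linear_combination hup (n + 1) + C (ℓ (n + 1)) * hup n + (X - C c) * hdown n

end Connection

/-- The semi-infinite upper bidiagonal matrix with diagonal `β` and superdiagonal `1`. -/
def upperBidiagonal (β : ℕ → ℂ) (i j : ℕ) : ℂ :=
  if j = i then β i else if j = i + 1 then 1 else 0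

/-- The semi-infinite unit lower bidiagonal matrix with subdiagonal `ℓ`; the entry in row `i` is
`ℓ i`, so `ℓ 0` does not occur. -/
def unitLowerBidiagonal (ℓ : ℕ → ℂ) (i j : ℕ) : ℂ :=
  if i = j then 1 else if i = j + 1 then ℓ i else 0

lemma mprod_upperBidiagonal (β : ℕ → ℂ) (A : ℕ → ℕ → ℂ) (i j : ℕ) :
    mprod (upperBidiagonal β) A i j = β i * A i j + A (i + 1) j := by
  unfold mprod
  rw [tsum_eq_sum (s := {i, i + 1}), Finset.sum_pair (by lia)]
  · simp [upperBidiagonal]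
  · intro k hk
    simp_all [upperBidiagonal]

lemma mprod_unitLowerBidiagonal_zero (ℓ : ℕ → ℂ) (A : ℕ → ℕ → ℂ) (j : ℕ) :
    mprod (unitLowerBidiagonal ℓ) A 0 j = A 0 j := by
  unfold mprod
  rw [tsum_eq_single 0]
  · simp [unitLowerBidiagonal]
  · intro k hk
    simp [unitLowerBidiagonal, hk.symm]

lemma mprod_unitLowerBidiagonal_succ (ℓ : ℕ → ℂ) (A : ℕ → ℕ → ℂ) (i j : ℕ) :
    mprod (unitLowerBidiagonal ℓ) A (i + 1) j = ℓ (i + 1) * A i j + A (i + 1) j := by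
  unfold mprod
  rw [tsum_eq_sum (s := {i, i + 1}), Finset.sum_pair (by lia)]
  · simp [unitLowerBidiagonal]
  · intro k hk
    simp_all [unitLowerBidiagonal, eq_comm]

lemma mprod_upperBidiagonal_unitLowerBidiagonal (β ℓ : ℕ → ℂ) :
    mprod (upperBidiagonal β) (unitLowerBidiagonal ℓ) =
      jacobi (fun n => β n * ℓ n) fun n => β n + ℓ (n + 1) := by
  ext i j
  rw [mprod_upperBidiagonal]
  unfold unitLowerBidiagonal jacobi
  grind

lemma mprod_unitLowerBidiagonal_upperBidiagonal (β ℓ : ℕ → ℂ) :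
    mprod (unitLowerBidiagonal ℓ) (upperBidiagonal β) =
      jacobi (fun n => ℓ n * β (n - 1)) fun n => β n + if n = 0 then 0 else ℓ n := by
  ext i j
  cases i with
  | zero =>
    rw [mprod_unitLowerBidiagonal_zero]
    unfold upperBidiagonal jacobi
    grind
  | succ i =>
    rw [mprod_unitLowerBidiagonal_succ]
    unfold upperBidiagonal jacobi
    grind

lemma jacobi_add_const_sub (a b : ℕ → ℂ) (c : ℂ) (i j : ℕ) :
    jacobi a (fun n => b n + c) i j - (if i = j then c else 0) = jacobi a b i j := by
  unfold jacobi
  split_ifs <;> ring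

/-- UL factorization for the Geronimus transformation `(x-c)v̂ = v`:
`J - cI = U·L` and `Ĵ - cI = L·U`. -/
theorem stmt_15 (v : ℕ → ℂ) (c : ℂ) (P : ℕ → Polynomial ℂ) (hP : IsSMOP v P)
    (a b : ℕ → ℂ) (hrec : HasTTRR P a b) (ha : ∀ n, 1 ≤ n → a n ≠ 0)
    (P1 : ℕ → Polynomial ℂ)
    (hP1 : HasTTRR P1 (fun n => a (n + 1)) (fun n => b (n + 1)))
    (vh : ℕ → ℂ) (hger : ∀ n, vh (n + 1) - c * vh n = v n)
    (hcond : ∀ n, 1 ≤ n → v 0 * (P1 (n - 1)).eval c + vh 0 * (P n).eval c ≠ 0)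
    (Ph : ℕ → Polynomial ℂ) (hPh : IsSMOP vh Ph)
    (ah bh : ℕ → ℂ) (hrech : HasTTRR Ph ah bh)
    (hPhc : ∀ n, (Ph n).eval c ≠ 0)
    (ell beta : ℕ → ℂ)
    (hell : ∀ n, 1 ≤ n → ell n =
      -(v 0 * (P1prev P1 n).eval c + vh 0 * (P n).eval c)
        / (v 0 * (P1prev P1 (n - 1)).eval c + vh 0 * (P (n - 1)).eval c))
    (hbeta : ∀ n, beta n = -((Ph (n + 1)).eval c / (Ph n).eval c))
    (L U : ℕ → ℕ → ℂ)
    (hL : ∀ i j, L i j = if i = j then 1 else if i = j + 1 then ell i else 0)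
    (hU : ∀ i j, U i j = if j = i then beta i else if j = i + 1 then 1 else 0) :
    (∀ i j, (jacobi a b i j - if i = j then c else 0) = mprod U L i j)
    ∧ (∀ i j, (jacobi ah bh i j - if i = j then c else 0) = mprod L U i j) := by
  have hger' : IsGeronimusTransform c v vh := hger
  have hfapply := hger'.fapply_eq hP hrec hP1
  have hne (n : ℕ) : fapply vh (P n) ≠ 0 := by
    cases n with
    | zero => simpa only [hP.zero_eq_one, fapply_one] using hPh.moment_zero_ne_zero
    | succ n => simpa [hfapply, P1prev] using hcond (n + 1) le_add_self
  have hup (n : ℕ) : (X - C c) * P n = Ph (n + 1) + C (beta n) * Ph n :=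
    hbeta n ▸ hger'.X_sub_C_mul_eq hP hPh (hPhc n)
  have hdown (n : ℕ) : Ph (n + 1) = P (n + 1) + C (ell (n + 1)) * P n := by
    rw [hell (n + 1) le_add_self, ← hfapply, ← hfapply]
    exact hger'.succ_eq hP hPh (hne n)
  obtain rfl : L = unitLowerBidiagonal ell := funext₂ hL
  obtain rfl : U = upperBidiagonal beta := funext₂ hU
  refine ⟨fun i j => ?_, fun i j => ?_⟩
  · rw [mprod_upperBidiagonal_unitLowerBidiagonal, hrec.jacobi_eq
      (hasTTRR_of_connection hrec.1 hrech.1 hup hdown) hP.linearIndependent, jacobi_add_const_sub]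
  · rw [mprod_unitLowerBidiagonal_upperBidiagonal, hrech.jacobi_eq
      (hasTTRR_transform_of_connection hrec.1 hrech.1 hup hdown) hPh.linearIndependent,
      jacobi_add_const_sub]
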